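/- Let 0 < β < |s|. There exists C > 0, depending only on d, s and β, such that for every λ ∈ (0,1] and every measurable φ : ℝ^d → ℝ with |φ| ≤ 1 everywhere and φ(x) = 0 whenever |x|_s > 1, one has ∫∫_{ℝ^d×ℝ^d} |φ^λ(x)| |φ^λ(y)| |x−y|_s^{−β} dx dy ≤ C λ^{−β}. In particular, the function x ↦ |x|_s^{−β} is integrable on {x ∈ ℝ^d : |x|_s ≤ 2} whenever β < |s|. -/

import Mathlib

open MeasureTheory Filter

noncomputable section

def anorm {d : ℕ} (s : Fin d → ℝ) (x : Fin d → ℝ) : ℝ :=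
  ∑ j, |x j| ^ (1 / s j)

def scaled {d : ℕ} (s : Fin d → ℝ) (lam : ℝ) (φ : (Fin d → ℝ) → ℝ) (x : Fin d → ℝ) : ℝ :=
  lam ^ (-(∑ j, s j)) * φ (fun j => x j / lam ^ (s j))

/-! The dilation `x ↦ (lam ^ s j * x j)_j` multiplies `anorm s` by `lam` and volumes by
`lam ^ |s|`, so substituting it in both variables shows that the double integral for `φ^λ` is
exactly `lam ^ (-β)` times the one for `φ`. For `φ` bounded by one and supported in the unit ball,
translation invariance and the quasi-triangle inequality bound the latter by the volume of that
ball times the integral of `anorm s ^ (-β)` over a larger ball. This is finite: for `0 ≤ β` the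
bounds `|x j| ≤ anorm s x ^ s j` multiply up to `anorm s x ^ (-β) ≤ ∏ j, |x j| ^ (-β / |s|)`, a
product of one-variable functions that are locally integrable because `β / |s| < 1`. -/

section General

lemma integrableOn_abs_rpow_Icc {p : ℝ} (hp : -1 < p) (a b : ℝ) :
    IntegrableOn (fun t : ℝ => |t| ^ p) (Set.Icc a b) := by
  have h_pos (c : ℝ) (hc : 0 < c) : IntervalIntegrable (fun t : ℝ => |t| ^ p) volume 0 c :=
    (intervalIntegral.intervalIntegrable_rpow' hp).congr fun t ht => by
      rw [Set.uIoc_of_le hc.le] at ht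
      simp only [abs_of_pos ht.1]
  have h_interval : IntervalIntegrable (fun t : ℝ => |t| ^ p) volume a b :=
    intervalIntegrable_of_even (fun t => by rw [abs_neg]) h_pos
  rw [integrableOn_Icc_iff_integrableOn_Ioc]
  exact h_interval.1

variable {ι : Type*} [Fintype ι]

lemma integrableOn_prod_univ_pi {E : ι → Type*} {𝕜 : Type*} [∀ i, MeasurableSpace (E i)]
    [NormedCommRing 𝕜] {μ : ∀ i, Measure (E i)} [∀ i, SigmaFinite (μ i)] {f : ∀ i, E i → 𝕜}
    {t : ∀ i, Set (E i)} (hf : ∀ i, IntegrableOn (f i) (t i) (μ i)) :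
    IntegrableOn (fun x : ∀ i, E i => ∏ i, f i (x i)) (Set.univ.pi t) (Measure.pi μ) := by
  rw [IntegrableOn, Measure.restrict_pi_pi]
  exact Integrable.fintype_prod_dep hf

lemma ae_forall_apply_ne {E : ι → Type*} [∀ i, MeasurableSpace (E i)]
    (μ : ∀ i, Measure (E i)) [∀ i, SigmaFinite (μ i)] [∀ i, NullSingletonClass (μ i)]
    (c : ∀ i, E i) : ∀ᵐ x ∂Measure.pi μ, ∀ i, x i ≠ c i :=
  ae_all_iff.2 fun i => Measure.ae_eval_ne μ i (c i)

lemma integral_eq_abs_prod_smul_integral_comp_mul {E : Type*} [NormedAddCommGroup E]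
    [NormedSpace ℝ E] {c : ι → ℝ} (hc : ∀ i, c i ≠ 0) (f : (ι → ℝ) → E) :
    ∫ x, f x = |∏ i, c i| • ∫ x, f (c * x) := by
  classical
  have h_det : (Matrix.diagonal c).det ≠ 0 := by
    rw [Matrix.det_diagonal]
    exact Finset.prod_ne_zero_iff.2 fun i _ => hc i
  have h_embedding : MeasurableEmbedding fun x : ι → ℝ => c * x :=
    (Homeomorph.piCongrRight fun i => Homeomorph.mulLeft₀ (c i) (hc i)).measurableEmbedding
  have h_toLin : ⇑(Matrix.toLin' (Matrix.diagonal c)) = fun x => c * x :=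
    funext fun x => funext fun i => by simp [Matrix.mulVec_diagonal]
  have h_map :
      ENNReal.ofReal |∏ i, c i| • Measure.map (fun x : ι → ℝ => c * x) volume = volume := by
    simpa only [Matrix.det_diagonal, h_toLin] using Real.smul_map_diagonal_volume_pi h_det
  rw [← h_embedding.integral_map, ← ENNReal.toReal_ofReal (abs_nonneg _),
    ← integral_smul_measure, h_map]

lemma integral_integral_abs_mul_abs_mul_comp_sub_le {G : Type*} [AddGroup G] [MeasurableSpace G]
    [MeasurableAdd G] [MeasurableNeg G] {μ : Measure G} [μ.IsAddLeftInvariant] [μ.IsNegInvariant]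
    {φ k : G → ℝ} {A B : Set G} (hA : MeasurableSet A) (hB : MeasurableSet B) (hμA : μ A ≠ ⊤)
    (hAB : ∀ x ∈ A, ∀ y ∈ A, x - y ∈ B) (hk : ∀ z, 0 ≤ k z) (hkB : IntegrableOn k B μ)
    (hφ : ∀ x, |φ x| ≤ 1) (hφA : ∀ x ∉ A, φ x = 0) :
    ∫ x, ∫ y, |φ x| * |φ y| * k (x - y) ∂μ ∂μ ≤ μ.real A * ∫ z in B, k z ∂μ := by
  have h_nonneg (x y : G) : 0 ≤ |φ x| * |φ y| * k (x - y) :=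
    mul_nonneg (by positivity) (hk _)
  have h_indicator_nonneg (z : G) : 0 ≤ B.indicator k z := Set.indicator_nonneg (fun z _ => hk z) z
  have h_kernel : Integrable (B.indicator k) μ := (integrable_indicator_iff hB).2 hkB
  have h_pointwise {x : G} (hx : x ∈ A) (y : G) :
      |φ x| * |φ y| * k (x - y) ≤ B.indicator k (x - y) := by
    by_cases hy : y ∈ A
    · rw [Set.indicator_of_mem (hAB x hx y hy)]
      exact mul_le_of_le_one_left (hk _) (mul_le_one₀ (hφ x) (abs_nonneg _) (hφ y))
    · simpa [hφA y hy] using h_indicator_nonneg (x - y)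
  have h_inner (x : G) : ∫ y, |φ x| * |φ y| * k (x - y) ∂μ ≤
      A.indicator (fun _ => ∫ z in B, k z ∂μ) x := by
    by_cases hx : x ∈ A
    · rw [Set.indicator_of_mem hx, ← integral_indicator hB,
        ← integral_sub_left_eq_self (B.indicator k) μ x]
      exact integral_mono_of_nonneg (Eventually.of_forall (h_nonneg x))
        (h_kernel.comp_sub_left x) (Eventually.of_forall (h_pointwise hx))
    · simp [hφA x hx, hx]
  calc ∫ x, ∫ y, |φ x| * |φ y| * k (x - y) ∂μ ∂μ
      ≤ ∫ x, A.indicator (fun _ => ∫ z in B, k z ∂μ) x ∂μ :=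
        integral_mono_of_nonneg (Eventually.of_forall fun x => integral_nonneg (h_nonneg x))
          ((integrable_indicator_iff hA).2 (integrableOn_const hμA)) (Eventually.of_forall h_inner)
    _ = μ.real A * ∫ z in B, k z ∂μ := by rw [integral_indicator_const _ hA, smul_eq_mul]

end General

section Anorm

variable {d : ℕ} {s : Fin d → ℝ}

lemma anorm_nonneg (s x : Fin d → ℝ) : 0 ≤ anorm s x :=
  Finset.sum_nonneg fun _ _ => Real.rpow_nonneg (abs_nonneg _) _

lemma measurable_anorm (s : Fin d → ℝ) : Measurable (anorm s) := by
  unfold anorm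
  fun_prop

lemma measurableSet_anorm_le (s : Fin d → ℝ) (r : ℝ) : MeasurableSet {x | anorm s x ≤ r} :=
  measurableSet_le (measurable_anorm s) measurable_const

lemma abs_rpow_le_anorm (s x : Fin d → ℝ) (j : Fin d) : |x j| ^ (1 / s j) ≤ anorm s x :=
  Finset.single_le_sum (f := fun j => |x j| ^ (1 / s j))
    (fun _ _ => Real.rpow_nonneg (abs_nonneg _) _) (Finset.mem_univ j)

lemma abs_le_anorm_rpow {j : Fin d} (hs : 0 < s j) (x : Fin d → ℝ) :
    |x j| ≤ anorm s x ^ s j :=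
  (Real.rpow_inv_le_iff_of_pos (abs_nonneg _) (anorm_nonneg s x) hs).1
    (by simpa only [one_div] using abs_rpow_le_anorm s x j)

lemma anorm_le_subset_pi_Icc (hs : ∀ j, 0 < s j) (r : ℝ) :
    {x | anorm s x ≤ r} ⊆ Set.univ.pi fun j => Set.Icc (-r ^ s j) (r ^ s j) :=
  fun x hx j _ => abs_le.1 <| (abs_le_anorm_rpow (hs j) x).trans <|
    Real.rpow_le_rpow (anorm_nonneg s x) hx (hs j).le

lemma volume_anorm_le_ne_top (hs : ∀ j, 0 < s j) (r : ℝ) :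
    volume {x : Fin d → ℝ | anorm s x ≤ r} ≠ ⊤ :=
  measure_ne_top_of_subset (anorm_le_subset_pi_Icc hs r)
    (isCompact_univ_pi fun _ => isCompact_Icc).measure_ne_top

lemma anorm_sub_le (hs : ∀ j, 0 ≤ s j) (x y : Fin d → ℝ) :
    anorm s (x - y) ≤ (∑ j, (2 : ℝ) ^ (1 / s j)) * max (anorm s x) (anorm s y) := by
  rw [Finset.sum_mul]
  refine Finset.sum_le_sum fun j _ => ?_
  have h_exp : 0 ≤ 1 / s j := one_div_nonneg.2 (hs j)
  have h_max : max |x j| |y j| ^ (1 / s j) ≤ max (anorm s x) (anorm s y) := by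
    rw [(Real.monotoneOn_rpow_Ici_of_exponent_nonneg h_exp).map_max (abs_nonneg (x j))
      (abs_nonneg (y j))]
    exact max_le_max (abs_rpow_le_anorm s x j) (abs_rpow_le_anorm s y j)
  calc |x j - y j| ^ (1 / s j)
      ≤ (2 * max |x j| |y j|) ^ (1 / s j) := by
        refine Real.rpow_le_rpow (abs_nonneg _) ?_ h_exp
        linarith [abs_sub (x j) (y j), le_max_left |x j| |y j|, le_max_right |x j| |y j|]
    _ = 2 ^ (1 / s j) * max |x j| |y j| ^ (1 / s j) :=
        Real.mul_rpow two_pos.le (le_max_of_le_left (abs_nonneg _))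
    _ ≤ 2 ^ (1 / s j) * max (anorm s x) (anorm s y) :=
        mul_le_mul_of_nonneg_left h_max (Real.rpow_nonneg two_pos.le _)

lemma anorm_rpow_neg_le_prod (hs : ∀ j, 0 < s j) {β : ℝ} (hβ : 0 ≤ β) (hsum : 0 < ∑ j, s j)
    {x : Fin d → ℝ} (hx : ∀ j, x j ≠ 0) :
    anorm s x ^ (-β) ≤ ∏ j, |x j| ^ (-(β / ∑ j, s j)) := by
  obtain ⟨i, -, -⟩ := Finset.exists_ne_zero_of_sum_ne_zero hsum.ne'
  have h_pos : 0 < anorm s x :=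
    (Real.rpow_pos_of_pos (abs_pos.2 (hx i)) _).trans_le (abs_rpow_le_anorm s x i)
  have h_exp : -β = ∑ j, s j * -(β / ∑ j, s j) := by
    rw [← Finset.sum_mul]
    field_simp
  calc anorm s x ^ (-β) = ∏ j, (anorm s x ^ s j) ^ (-(β / ∑ j, s j)) := by
        rw [h_exp, Real.rpow_sum_of_pos h_pos]
        exact Finset.prod_congr rfl fun j _ => Real.rpow_mul h_pos.le _ _
    _ ≤ ∏ j, |x j| ^ (-(β / ∑ j, s j)) :=
        Finset.prod_le_prod (fun _ _ => by positivity) fun j _ =>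
          Real.rpow_le_rpow_of_nonpos (abs_pos.2 (hx j)) (abs_le_anorm_rpow (hs j) x)
            (neg_nonpos.2 (by positivity))

lemma integrableOn_anorm_rpow_of_nonneg (hs : ∀ j, 0 < s j) {p : ℝ} (hp : 0 ≤ p) (r : ℝ) :
    IntegrableOn (fun x : Fin d → ℝ => anorm s x ^ p) {x | anorm s x ≤ r} := by
  refine (integrableOn_const (C := r ^ p) (volume_anorm_le_ne_top hs r)).mono'
    ((measurable_anorm s).pow_const _).aestronglyMeasurable ?_
  filter_upwards [ae_restrict_mem (measurableSet_anorm_le s r)] with x hx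
  rw [Real.norm_of_nonneg (Real.rpow_nonneg (anorm_nonneg s x) _)]
  exact Real.rpow_le_rpow (anorm_nonneg s x) hx hp

lemma integrableOn_anorm_rpow_neg (hs : ∀ j, 0 < s j) {β : ℝ} (hβ : β < ∑ j, s j) (r : ℝ) :
    IntegrableOn (fun x : Fin d → ℝ => anorm s x ^ (-β)) {x | anorm s x ≤ r} := by
  rcases le_total β 0 with hβ0 | hβ0
  · exact integrableOn_anorm_rpow_of_nonneg hs (neg_nonneg.2 hβ0) r
  have hsum : 0 < ∑ j, s j := hβ0.trans_lt hβ
  have h_exp : -1 < -(β / ∑ j, s j) := neg_lt_neg ((div_lt_one hsum).2 hβ)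
  have h_prod : IntegrableOn (fun x : Fin d → ℝ => ∏ j, |x j| ^ (-(β / ∑ j, s j)))
      {x | anorm s x ≤ r} :=
    (integrableOn_prod_univ_pi fun _ => integrableOn_abs_rpow_Icc h_exp _ _).mono_set
      (anorm_le_subset_pi_Icc hs r)
  refine h_prod.mono' ((measurable_anorm s).pow_const _).aestronglyMeasurable ?_
  filter_upwards [ae_restrict_of_ae (ae_forall_apply_ne (fun _ => volume) 0)] with x hx
  rw [Real.norm_of_nonneg (Real.rpow_nonneg (anorm_nonneg s x) _)]
  exact anorm_rpow_neg_le_prod hs hβ0 hsum hx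

/-- The anisotropic dilation by `lam`, under which `anorm s` is homogeneous of degree one. -/
def dilation (s : Fin d → ℝ) (lam : ℝ) (x : Fin d → ℝ) : Fin d → ℝ :=
  (fun j => lam ^ s j) * x

lemma dilation_sub (s : Fin d → ℝ) (lam : ℝ) (x y : Fin d → ℝ) :
    dilation s lam (x - y) = dilation s lam x - dilation s lam y :=
  mul_sub _ _ _

lemma anorm_dilation (hs : ∀ j, s j ≠ 0) {lam : ℝ} (hlam : 0 ≤ lam) (x : Fin d → ℝ) :
    anorm s (dilation s lam x) = lam * anorm s x := by
  simp only [anorm, Finset.mul_sum]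
  refine Finset.sum_congr rfl fun j _ => ?_
  have h_pow : 0 ≤ lam ^ s j := Real.rpow_nonneg hlam _
  rw [dilation, Pi.mul_apply, abs_mul, abs_of_nonneg h_pow, Real.mul_rpow h_pow (abs_nonneg _),
    one_div, Real.rpow_rpow_inv hlam (hs j)]

lemma scaled_dilation {lam : ℝ} (hlam : 0 < lam) (φ : (Fin d → ℝ) → ℝ) (x : Fin d → ℝ) :
    scaled s lam φ (dilation s lam x) = lam ^ (-∑ j, s j) * φ x := by
  have h_cancel : (fun j => dilation s lam x j / lam ^ s j) = x :=
    funext fun j => mul_div_cancel_left₀ _ (Real.rpow_pos_of_pos hlam _).ne'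
  rw [scaled, h_cancel]

lemma integral_eq_rpow_mul_integral_comp_dilation (s : Fin d → ℝ) {lam : ℝ} (hlam : 0 < lam)
    (f : (Fin d → ℝ) → ℝ) :
    ∫ x, f x = lam ^ (∑ j, s j) * ∫ x, f (dilation s lam x) := by
  rw [integral_eq_abs_prod_smul_integral_comp_mul fun j => (Real.rpow_pos_of_pos hlam (s j)).ne',
    ← Real.rpow_sum_of_pos hlam, abs_of_pos (Real.rpow_pos_of_pos hlam _), smul_eq_mul]
  rfl

/-- The Riesz energy of order `β` of `|φ|` for the anisotropic norm `anorm s`, as an iterated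
Bochner integral. For `0 < β` the kernel has the junk value `0` on the diagonal, a null set if
`0 < d`. -/
def rieszEnergy (s : Fin d → ℝ) (β : ℝ) (φ : (Fin d → ℝ) → ℝ) : ℝ :=
  ∫ x : Fin d → ℝ, ∫ y : Fin d → ℝ, |φ x| * |φ y| * anorm s (x - y) ^ (-β)

lemma rieszEnergy_scaled (hs : ∀ j, s j ≠ 0) (β : ℝ) {lam : ℝ} (hlam : 0 < lam)
    (φ : (Fin d → ℝ) → ℝ) :
    rieszEnergy s β (scaled s lam φ) = lam ^ (-β) * rieszEnergy s β φ := by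
  have h_kernel (x y : Fin d → ℝ) :
      |scaled s lam φ (dilation s lam x)| * |scaled s lam φ (dilation s lam y)| *
          anorm s (dilation s lam x - dilation s lam y) ^ (-β) =
        lam ^ (-∑ j, s j) * lam ^ (-∑ j, s j) * lam ^ (-β) *
          (|φ x| * |φ y| * anorm s (x - y) ^ (-β)) := by
    rw [scaled_dilation hlam, scaled_dilation hlam, ← dilation_sub, anorm_dilation hs hlam.le,
      Real.mul_rpow hlam.le (anorm_nonneg _ _), abs_mul, abs_mul,
      abs_of_pos (Real.rpow_pos_of_pos hlam _)]
    ring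
  calc rieszEnergy s β (scaled s lam φ)
      = lam ^ (∑ j, s j) * ∫ x, lam ^ (∑ j, s j) * ∫ y,
          |scaled s lam φ (dilation s lam x)| * |scaled s lam φ (dilation s lam y)| *
            anorm s (dilation s lam x - dilation s lam y) ^ (-β) := by
        rw [rieszEnergy, integral_eq_rpow_mul_integral_comp_dilation s hlam]
        congr! 3
        exact integral_eq_rpow_mul_integral_comp_dilation s hlam _
    _ = lam ^ (∑ j, s j) * (lam ^ (∑ j, s j) *
          (lam ^ (-∑ j, s j) * lam ^ (-∑ j, s j) * lam ^ (-β) * rieszEnergy s β φ)) := by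
        simp only [h_kernel, integral_const_mul, rieszEnergy]
    _ = lam ^ (-β) * rieszEnergy s β φ := by
        rw [Real.rpow_neg hlam.le (∑ j, s j)]
        field_simp

lemma rieszEnergy_le (hs : ∀ j, 0 < s j) {β : ℝ} (hβ : β < ∑ j, s j) {φ : (Fin d → ℝ) → ℝ}
    (hφ : ∀ x, |φ x| ≤ 1) (hφs : ∀ x, 1 < anorm s x → φ x = 0) :
    rieszEnergy s β φ ≤ volume.real {x : Fin d → ℝ | anorm s x ≤ 1} *
      ∫ z in {z | anorm s z ≤ ∑ j, (2 : ℝ) ^ (1 / s j)}, anorm s z ^ (-β) := by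
  refine integral_integral_abs_mul_abs_mul_comp_sub_le (k := fun z => anorm s z ^ (-β))
    (measurableSet_anorm_le s 1) (measurableSet_anorm_le s _) (volume_anorm_le_ne_top hs 1)
    (fun x hx y hy => ?_) (fun z => Real.rpow_nonneg (anorm_nonneg s z) _)
    (integrableOn_anorm_rpow_neg hs hβ _) hφ fun x hx => hφs x (not_le.1 hx)
  exact (anorm_sub_le (fun j => (hs j).le) x y).trans <|
    mul_le_of_le_one_right (by positivity) (max_le hx hy)

end Anorm

theorem stmt12_general {d : ℕ} {s : Fin d → ℝ} (hs : ∀ j, 0 < s j) {β : ℝ}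
    (hβ : β < ∑ j, s j) :
    (∃ C > 0, ∀ lam > 0, ∀ φ : (Fin d → ℝ) → ℝ, Measurable φ →
      (∀ x, |φ x| ≤ 1) → (∀ x, 1 < anorm s x → φ x = 0) →
      rieszEnergy s β (scaled s lam φ) ≤ C * lam ^ (-β))
    ∧ ∀ r, IntegrableOn (fun x : Fin d → ℝ => anorm s x ^ (-β)) {x | anorm s x ≤ r} := by
  refine ⟨?_, integrableOn_anorm_rpow_neg hs hβ⟩
  set K := volume.real {x : Fin d → ℝ | anorm s x ≤ 1} *
    ∫ z in {z | anorm s z ≤ ∑ j, (2 : ℝ) ^ (1 / s j)}, anorm s z ^ (-β)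
  refine ⟨max K 1, lt_max_of_lt_right one_pos, fun lam hlam φ _ hφ hφs => ?_⟩
  rw [rieszEnergy_scaled (fun j => (hs j).ne') β hlam, mul_comm]
  gcongr
  exact (rieszEnergy_le hs hβ hφ hφs).trans (le_max_left _ _)

/-- the anisotropic singular-integral bound
`∫∫ |φ^λ(x)| |φ^λ(y)| |x−y|ₛ^{−β} dx dy ≤ C λ^{−β}` for `0 < β < |s|`, and the resulting
local integrability of `x ↦ |x|ₛ^{−β}`. -/
theorem stmt12 (d : ℕ) (hd : 1 ≤ d) (s : Fin d → ℝ) (hs : ∀ j, 1 ≤ s j)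
    (β : ℝ) (hβ0 : 0 < β) (hβ : β < ∑ j, s j) :
    (∃ C > 0, ∀ lam ∈ Set.Ioc (0:ℝ) 1, ∀ φ : (Fin d → ℝ) → ℝ, Measurable φ →
      (∀ x, |φ x| ≤ 1) → (∀ x, 1 < anorm s x → φ x = 0) →
      (∫ x : Fin d → ℝ, ∫ y : Fin d → ℝ,
          |scaled s lam φ x| * |scaled s lam φ y| * anorm s (x - y) ^ (-β)) ≤ C * lam ^ (-β))
    ∧ IntegrableOn (fun x : Fin d → ℝ => anorm s x ^ (-β)) {x | anorm s x ≤ 2} := by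
  have ⟨⟨C, hC, h_bound⟩, h_int⟩ := stmt12_general (fun j => one_pos.trans_le (hs j)) hβ
  exact ⟨⟨C, hC, fun lam hlam => h_bound lam hlam.1⟩, h_int 2⟩
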